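/- arXiv:1406.6904 — 6 statements merged into one kernel-verified Lean document; each statement's English description precedes it below -/
import Mathlib

section
/- Let 0 < a < 1 < A be constants and let 𝒜 = ((a_{N,n})_{N∈ℕ})_{n∈ℕ} be a double sequence of weights on 𝔻 with a_{N,n+1} ≤ a_{N,n} ≤ a_{N+1,n} pointwise, satisfying condition (LOG) with constants a, A. If 𝒜 satisfies condition (Q)~, then 𝒜 satisfies condition (P̄₂): for every N there exist M ≥ N and n such that for every K ≥ M, every m and every ε > 0 there exist k and S > 0 with B_{M,m} ⊆ ε·B_{N,n} + S·B_{K,k}, i.e. every holomorphic f on 𝔻 with ‖f‖_{a_{M,m}} ≤ 1 can be written f = g + h with holomorphic g, h satisfying ‖g‖_{a_{N,n}} ≤ ε and ‖h‖_{a_{K,k}} ≤ S. -/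
noncomputable section

open Complex

/-- The open unit disc in ℂ. -/
def uD : Set ℂ := {z : ℂ | ‖z‖ < 1}

/-- Holomorphic on the unit disc. -/
def Holo (f : ℂ → ℂ) : Prop := DifferentiableOn ℂ f uD

/-- A weight on 𝔻: continuous and strictly positive. -/
def IsWeight (v : ℂ → ℝ) : Prop :=
  ContinuousOn v uD ∧ ∀ z ∈ uD, 0 < v z

/-- Radial weight. -/
def Radial (v : ℂ → ℝ) : Prop :=
  ∀ z ∈ uD, ∀ w ∈ uD, ‖z‖ = ‖w‖ → v z = v w

/-- Non-increasing in the modulus. -/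
def NonInc (v : ℂ → ℝ) : Prop :=
  ∀ z ∈ uD, ∀ w ∈ uD, ‖z‖ ≤ ‖w‖ → v w ≤ v z

/-- r₀ = 0, r_κ = 1 - 2^(-2^κ) for κ ≥ 1. -/
def rseq (κ : ℕ) : ℝ := if κ = 0 then 0 else 1 - 1 / 2 ^ (2 ^ κ)

/-- Condition (LOG 1) for a single radial weight. -/
def Log1 (A : ℝ) (v : ℂ → ℝ) : Prop :=
  ∀ κ : ℕ, v (rseq κ : ℂ) ≤ A * v (rseq (κ + 1) : ℂ)

/-- Condition (LOG 2) for a single radial weight. -/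
def Log2 (a : ℝ) (v : ℂ → ℝ) : Prop :=
  ∀ κ : ℕ, v (rseq (κ + 1) : ℂ) ≤ a * v (rseq κ : ℂ)

/-- The weight tends to 0 as |z| → 1. -/
def VanishAtOne (v : ℂ → ℝ) : Prop :=
  ∀ ε > 0, ∃ r : ℝ, r < 1 ∧ ∀ z ∈ uD, r ≤ ‖z‖ → v z ≤ ε

/-- Associated growth function w~ of a growth condition w. -/
def growthTilde (w : ℂ → ℝ) (z : ℂ) : ℝ :=
  sSup {t : ℝ | ∃ g : ℂ → ℂ, Holo g ∧ (∀ x ∈ uD, ‖g x‖ ≤ w x) ∧ t = ‖g z‖}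

/-- Associated weight ṽ = 1/(1/v)~. -/
def assocWeight (v : ℂ → ℝ) (z : ℂ) : ℝ := (growthTilde (fun x => 1 / v x) z)⁻¹

/-- Monotonicity of the double sequence: decreasing in n, increasing in N. -/
def MonoSeq (a : ℕ → ℕ → ℂ → ℝ) : Prop :=
  ∀ N n, ∀ z ∈ uD, a N (n + 1) z ≤ a N n z ∧ a N n z ≤ a (N + 1) n z

/-- Condition (LOG) for a double sequence with constants 0 < a < 1 < A. -/
def SeqLOG (aa A : ℝ) (a : ℕ → ℕ → ℂ → ℝ) : Prop :=
  ∀ N n, Radial (a N n) ∧ NonInc (a N n) ∧ VanishAtOne (a N n) ∧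
    Log1 A (a N n) ∧ Log2 aa (a N n)

/-- Condition (Q). -/
def CondQ (a : ℕ → ℕ → ℂ → ℝ) : Prop :=
  ∀ N, ∃ M ≥ N, ∃ n, ∀ K ≥ M, ∀ m, ∀ ε > 0, ∃ k, ∃ S > 0,
    ∀ z ∈ uD, 1 / a M m z ≤ max (ε / a N n z) (S / a K k z)

/-- Condition (wQ). -/
def CondwQ (a : ℕ → ℕ → ℂ → ℝ) : Prop :=
  ∀ N, ∃ M ≥ N, ∃ n, ∀ K ≥ M, ∀ m, ∃ k, ∃ S > 0,
    ∀ z ∈ uD, 1 / a M m z ≤ max (S / a N n z) (S / a K k z)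

/-- Condition (Q)~. -/
def CondQTilde (a : ℕ → ℕ → ℂ → ℝ) : Prop :=
  ∀ N, ∃ M ≥ N, ∃ n, ∀ K ≥ M, ∀ m, ∀ ε > 0, ∃ k, ∃ S > 0,
    ∀ z ∈ uD, growthTilde (fun x => 1 / a M m x) z ≤
      growthTilde (fun x => max (ε / a N n x) (S / a K k x)) z

/-- Pointwise maximum max_{N=1,…,L} a_{N,n(N)}. -/
def finMax (a : ℕ → ℕ → ℂ → ℝ) (nn : ℕ → ℕ) (L : ℕ) (z : ℂ) : ℝ :=
  sSup {t : ℝ | ∃ N, 1 ≤ N ∧ N ≤ L ∧ t = a N (nn N) z}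

/-- Condition (B). -/
def CondB (a : ℕ → ℕ → ℂ → ℝ) : Prop :=
  ∀ nn : ℕ → ℕ, ∃ m, ∀ M, ∃ L, 1 ≤ L ∧ ∃ c > 0,
    ∀ z ∈ uD, a M m z ≤ c * finMax a nn L z

/-- Condition (B)~. -/
def CondBTilde (a : ℕ → ℕ → ℂ → ℝ) : Prop :=
  ∀ nn : ℕ → ℕ, ∃ m, ∀ M, ∃ L, 1 ≤ L ∧ ∃ c > 0,
    ∀ z ∈ uD, assocWeight (a M m) z ≤ c * assocWeight (finMax a nn L) z

/-- A weight is essential. -/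
def Essential (v : ℂ → ℝ) : Prop :=
  ∃ C > 0, ∀ z ∈ uD,
    growthTilde (fun x => 1 / v x) z ≤ 1 / v z ∧
    1 / v z ≤ C * growthTilde (fun x => 1 / v x) z

/-- Condition (Σ). -/
def CondSigma (a : ℕ → ℕ → ℂ → ℝ) : Prop :=
  ∀ N, ∃ K ≥ N, ∀ k, ∃ n ≥ k, ∀ ε > 0, ∃ Q : Set ℂ,
    IsCompact Q ∧ Q ⊆ uD ∧ ∀ z ∈ uD \ Q, a N n z / a K k z ≤ ε

/-- The Banach space Ha(𝔻) as a set of functions. -/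
def HaSet (v : ℂ → ℝ) : Set (ℂ → ℂ) :=
  {f | Holo f ∧ ∃ C : ℝ, ∀ z ∈ uD, v z * ‖f z‖ ≤ C}

/-- The distance of `r_κ` to the boundary. -/
def dseq (κ : ℕ) : ℝ := 1 - rseq κ

lemma dseq_zero : dseq 0 = 1 := by simp [dseq, rseq]

lemma dseq_succ (κ : ℕ) : dseq (κ + 1) = 1 / 2 ^ (2 ^ (κ + 1)) := by simp [dseq, rseq]

lemma dseq_pos (κ : ℕ) : 0 < dseq κ := by
  cases κ with
  | zero => rw [dseq_zero]; norm_num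
  | succ k => rw [dseq_succ]; positivity

lemma dseq_le_one (κ : ℕ) : dseq κ ≤ 1 := by
  cases κ with
  | zero => rw [dseq_zero]
  | succ k =>
    rw [dseq_succ, div_le_one (by positivity)]
    exact one_le_pow₀ (by norm_num)

lemma dseq_add (j i : ℕ) : dseq (j + i) ≤ dseq j * dseq i := by
  rcases j with _ | j
  · simp [dseq_zero]
  rcases i with _ | i
  · simp [dseq_zero]
  have h : j + 1 + (i + 1) = (j + 1 + i) + 1 := by ring
  rw [h, dseq_succ, dseq_succ, dseq_succ, div_mul_div_comm, ← pow_add, one_mul]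
  apply one_div_le_one_div_of_le (by positivity)
  apply pow_le_pow_right₀ (by norm_num)
  have h1 : 2 ≤ 2 ^ (j + 1) := by
    calc 2 = 2 ^ 1 := by norm_num
      _ ≤ _ := Nat.pow_le_pow_right (by norm_num) (by omega)
  have h2 : 2 ≤ 2 ^ (i + 1) := by
    calc 2 = 2 ^ 1 := by norm_num
      _ ≤ _ := Nat.pow_le_pow_right (by norm_num) (by omega)
  have h3 : 2 ^ (j + 1 + i + 1) = 2 ^ (j + 1) * 2 ^ (i + 1) := by ring
  rw [h3]
  nlinarith

lemma dseq_one : dseq 1 = 1 / 4 := by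
  have := dseq_succ 0
  norm_num at this ⊢
  exact this

lemma dseq_succ_le (j : ℕ) : dseq (j + 1) ≤ dseq j / 4 := by
  have := dseq_add j 1
  rw [dseq_one] at this
  linarith

lemma dseq_le_geom (i : ℕ) : dseq i ≤ (1 / 4) ^ i := by
  induction i with
  | zero => simp [dseq_zero]
  | succ i ih => have := dseq_succ_le i; rw [pow_succ]; linarith

lemma rseq_nonneg (κ : ℕ) : 0 ≤ rseq κ := by have := dseq_le_one κ; unfold dseq at this; linarith

lemma rseq_lt_one (κ : ℕ) : rseq κ < 1 := by have := dseq_pos κ; unfold dseq at this; linarith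

lemma rseq_mono : Monotone rseq := by
  apply monotone_nat_of_le_succ
  intro n
  have := dseq_succ_le n
  have := dseq_pos n
  unfold dseq at *
  linarith

lemma norm_rseq (κ : ℕ) : ‖(rseq κ : ℂ)‖ = rseq κ := by
  rw [Complex.norm_real, Real.norm_of_nonneg (rseq_nonneg κ)]

lemma rseq_mem (κ : ℕ) : (rseq κ : ℂ) ∈ uD := by
  show ‖_‖ < 1
  rw [norm_rseq]; exact rseq_lt_one κ

lemma rseq_tendsto : Filter.Tendsto rseq Filter.atTop (nhds 1) := by
  have h : Filter.Tendsto dseq Filter.atTop (nhds 0) :=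
    squeeze_zero (fun i => (dseq_pos i).le) dseq_le_geom
      (tendsto_pow_atTop_nhds_zero_of_lt_one (by norm_num) (by norm_num))
  have h2 := h.const_sub 1
  simpa [dseq] using h2

lemma summable_dseq (A : ℝ) (hA : 1 < A) : Summable (fun i => dseq i * A ^ (i + 1)) := by
  apply summable_of_ratio_test_tendsto_lt_one (l := 0) (by norm_num)
  · filter_upwards with i
    have := dseq_pos i
    positivity
  · have h0 : Filter.Tendsto (fun i : ℕ => A * dseq i) Filter.atTop (nhds 0) := by
      have := (rseq_tendsto.const_sub 1).const_mul A
      simpa [dseq] using this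
    apply squeeze_zero' (g := fun i : ℕ => A * dseq i) _ _ h0
    · filter_upwards with i; positivity
    · filter_upwards [Filter.eventually_ge_atTop 1] with i hi
      have h1 := dseq_pos i
      have h2 := dseq_pos (i + 1)
      rw [Real.norm_of_nonneg (by positivity), Real.norm_of_nonneg (by positivity),
        div_le_iff₀ (by positivity)]
      have h3 : dseq (i + 1) ≤ dseq i * dseq i := by
        obtain ⟨k, rfl⟩ : ∃ k, i = k + 1 := ⟨i - 1, by omega⟩
        rw [dseq_succ, dseq_succ, div_mul_div_comm, ← pow_add, one_mul]
        apply le_of_eq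
        congr 2
        ring
      calc dseq (i + 1) * A ^ (i + 1 + 1) ≤ (dseq i * dseq i) * A ^ (i + 1 + 1) := by gcongr
        _ = _ := by ring

lemma exists_shell {z : ℂ} (hz : z ∈ uD) (A : ℝ) (hA : 1 < A) :
    ∃ j, ‖z‖ ≤ rseq j ∧ ∀ w : ℂ → ℝ, IsWeight w → NonInc w → Log1 A w →
      w z ≤ A * w (rseq j) ∧ (0 < j → rseq (j - 1) ≤ ‖z‖) := by
  classical
  have hz' : ‖z‖ < 1 := hz
  have hex : ∃ j, ‖z‖ ≤ rseq j := by
    obtain ⟨j, hj⟩ := (rseq_tendsto.eventually (lt_mem_nhds hz')).exists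
    exact ⟨j, hj.le⟩
  refine ⟨Nat.find hex, Nat.find_spec hex, fun w hw hn hl => ?_⟩
  rcases h : Nat.find hex with _ | j
  · refine ⟨?_, fun h => absurd h (lt_irrefl _)⟩
    have h1 : w z ≤ w (rseq 0) := by
      apply hn _ (rseq_mem 0) _ hz
      rw [norm_rseq]; simp [rseq]
    have := hw.2 _ (rseq_mem 0)
    nlinarith
  · have h1 : rseq j ≤ ‖z‖ := by
      have := Nat.find_min hex (m := j) (by omega)
      exact (not_le.1 this).le
    refine ⟨?_, fun _ => by simpa using h1⟩
    exact (hn _ (rseq_mem j) _ hz (by rwa [norm_rseq])).trans (hl j)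

lemma log1_iter {A : ℝ} (hA : 1 < A) {v : ℂ → ℝ} (h : Log1 A v) (κ i : ℕ) :
    v (rseq κ) ≤ A ^ i * v (rseq (κ + i)) := by
  induction i with
  | zero => simp
  | succ i ih =>
    calc v (rseq κ) ≤ A ^ i * v (rseq (κ + i)) := ih
      _ ≤ A ^ i * (A * v (rseq (κ + i + 1))) := by gcongr; exact h _
      _ = _ := by rw [pow_succ, mul_assoc]; rfl

lemma log2_iter {a : ℝ} (ha : 0 < a) {v : ℂ → ℝ} (h : Log2 a v) (κ i : ℕ) :
    v (rseq (κ + i)) ≤ a ^ i * v (rseq κ) := by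
  induction i with
  | zero => simp
  | succ i ih =>
    calc v (rseq (κ + (i + 1))) ≤ a * v (rseq (κ + i)) := h _
      _ ≤ a * (a ^ i * v (rseq κ)) := by gcongr
      _ = _ := by ring

/-- The constant in the lower estimate for the associated growth function. -/
lemma essential_aux (A : ℝ) (hA : 1 < A) : ∃ C > 0, ∀ v : ℂ → ℝ, IsWeight v → NonInc v →
    Log1 A v → ∀ κ, 1 / v (rseq κ) ≤ C * growthTilde (fun x => 1 / v x) (rseq κ) := by
  set D := ∑' i, dseq i * A ^ (i + 1) with hD
  have hsum := summable_dseq A hA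
  have hterm : ∀ i, dseq i * A ^ (i + 1) ≤ D := fun i =>
    hsum.le_tsum i (fun k _ => by have := dseq_pos k; positivity)
  have hD1 : 1 ≤ D := by
    have := hterm 0
    rw [dseq_zero, zero_add, pow_one] at this
    linarith
  refine ⟨4 * D, by positivity, fun v hv hn hl κ => ?_⟩
  have hbdd : ∀ z ∈ uD, BddAbove {t : ℝ | ∃ g : ℂ → ℂ, Holo g ∧ (∀ x ∈ uD, ‖g x‖ ≤ 1 / v x)
      ∧ t = ‖g z‖} := by
    intro z hz
    refine ⟨1 / v z, ?_⟩
    rintro t ⟨g, _, hg, rfl⟩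
    exact hg z hz
  have hVpos := hv.2 _ (rseq_mem κ)
  suffices h : ∃ g : ℂ → ℂ, Holo g ∧ (∀ x ∈ uD, ‖g x‖ ≤ 1 / v x) ∧
      1 / v (rseq κ) ≤ 4 * D * ‖g (rseq κ)‖ by
    obtain ⟨g, hg, hgv, hgκ⟩ := h
    refine hgκ.trans ?_
    gcongr
    exact le_csSup (hbdd _ (rseq_mem κ)) ⟨g, hg, hgv, rfl⟩
  rcases κ with _ | κ
  · refine ⟨fun _ => ((1 / v (rseq 0) : ℝ) : ℂ), differentiableOn_const _, ?_, ?_⟩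
    · intro x hx
      rw [Complex.norm_real, Real.norm_of_nonneg (by positivity)]
      apply one_div_le_one_div_of_le (hv.2 x hx)
      apply hn _ (rseq_mem 0) _ hx
      rw [norm_rseq]; simp [rseq]
    · rw [Complex.norm_real, Real.norm_of_nonneg (by positivity)]
      have : 0 < 1 / v (rseq 0) := by positivity
      nlinarith
  · set n : ℕ := 2 ^ (2 ^ (κ + 1)) with hn'
    have hnpos : (0 : ℝ) < n := by rw [hn']; positivity
    have hdn : dseq (κ + 1) = 1 / n := by rw [dseq_succ, hn']; push_cast; rfl
    have hpos' : 0 < 1 / (D * v (rseq (κ + 1))) := by positivity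
    refine ⟨fun z => ((1 / (D * v (rseq (κ + 1))) : ℝ) : ℂ) * z ^ n, ?_, ?_, ?_⟩
    · exact ((differentiable_id.pow n).const_mul _).differentiableOn
    · intro x hx
      have hx1 : ‖x‖ < 1 := hx
      have hvx := hv.2 x hx
      rw [norm_mul, norm_pow, Complex.norm_real, Real.norm_of_nonneg hpos'.le]
      have key : v x * ‖x‖ ^ n ≤ D * v (rseq (κ + 1)) := by
        by_cases hc : rseq (κ + 1) ≤ ‖x‖
        · have h1 : v x ≤ v (rseq (κ + 1)) := hn _ (rseq_mem _) _ hx (by rwa [norm_rseq])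
          have h2 : ‖x‖ ^ n ≤ 1 := pow_le_one₀ (norm_nonneg _) hx1.le
          calc v x * ‖x‖ ^ n ≤ v x * 1 := by gcongr
            _ ≤ 1 * v (rseq (κ + 1)) := by linarith
            _ ≤ _ := by gcongr
        · obtain ⟨j, hj, hw⟩ := exists_shell hx A hA
          obtain ⟨hw1, hw2⟩ := hw v hv hn hl
          have hjκ : j ≤ κ + 1 := by
            by_contra hcon
            have h1 := hw2 (by omega)
            have h2 := rseq_mono (show κ + 1 ≤ j - 1 by omega)
            exact hc (h2.trans h1)
          obtain ⟨i, hi⟩ := Nat.exists_eq_add_of_le hjκ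
          have h3 : v (rseq j) ≤ A ^ i * v (rseq (κ + 1)) := by
            rw [hi]; exact log1_iter hA hl j i
          have h4 : ‖x‖ ^ n ≤ dseq i := by
            have hdj := dseq_pos j
            have e1 : ‖x‖ ≤ Real.exp (-dseq j) := by
              have := Real.add_one_le_exp (-dseq j)
              unfold dseq at *
              linarith
            have e2 : ‖x‖ ^ n ≤ Real.exp (-(n * dseq j)) := by
              calc ‖x‖ ^ n ≤ Real.exp (-dseq j) ^ n := by gcongr
                _ = _ := by rw [← Real.exp_nat_mul]; ring_nf
            have e3 : Real.exp (-(n * dseq j)) ≤ 1 / (n * dseq j) := by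
              rw [Real.exp_neg, ← one_div]
              apply one_div_le_one_div_of_le (by positivity)
              have := Real.add_one_le_exp (n * dseq j)
              linarith
            have e4 : 1 / (n * dseq j) ≤ dseq i := by
              have := dseq_add j i
              rw [← hi, hdn] at this
              rw [div_le_iff₀ (by positivity)] at this ⊢
              linarith
            linarith
          calc v x * ‖x‖ ^ n ≤ (A * (A ^ i * v (rseq (κ + 1)))) * dseq i := by
                apply mul_le_mul (hw1.trans (by gcongr)) h4 (by positivity) (by positivity)
            _ = (dseq i * A ^ (i + 1)) * v (rseq (κ + 1)) := by ring
            _ ≤ _ := by gcongr; exact hterm i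
      rw [one_div_mul_eq_div, div_le_div_iff₀ (by positivity) hvx]
      linarith
    · rw [norm_mul, norm_pow, Complex.norm_real, Real.norm_of_nonneg hpos'.le, norm_rseq]
      have hr : (1 : ℝ) / 4 ≤ rseq (κ + 1) ^ n := by
        obtain ⟨m, hm⟩ : ∃ m : ℕ, n = m * 2 := by
          have : (2 : ℕ) ∣ n := by
            rw [hn']; exact dvd_pow_self 2 (by positivity)
          obtain ⟨m, hm⟩ := this
          exact ⟨m, by omega⟩
        have hr0 : rseq (κ + 1) = 1 + -(1 / n) := by rw [← hdn]; unfold dseq; ring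
        have hb : (1 : ℝ) / 2 ≤ rseq (κ + 1) ^ m := by
          have hn1 : (1 : ℝ) ≤ n := by
            rw [hn']; push_cast; exact one_le_pow₀ (by norm_num)
          have h1n : 1 / (n : ℝ) ≤ 1 := by rw [div_le_one hnpos]; exact hn1
          have := one_add_mul_le_pow (a := -(1 / (n : ℝ))) (by linarith) m
          rw [← hr0] at this
          have hmn : (m : ℝ) * (1 / n) = 1 / 2 := by
            have : (n : ℝ) = m * 2 := by rw [hm]; push_cast; ring
            field_simp
            linarith
          linarith
        rw [hm, pow_mul]
        nlinarith
      calc 1 / v (rseq (κ + 1)) = 4 * D * (1 / (D * v (rseq (κ + 1))) * (1 / 4)) := by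
            field_simp
        _ ≤ _ := by gcongr

/-- The blocks of the decomposition. -/
def blk (f : ℂ → ℂ) : ℕ → ℂ → ℂ
  | 0, z => f (rseq 0 * z)
  | κ + 1, z => f (rseq (κ + 1) * z) - f (rseq κ * z)

lemma sum_blk (f : ℂ → ℂ) (z : ℂ) (n : ℕ) :
    ∑ i ∈ Finset.range (n + 1), blk f i z = f (rseq n * z) := by
  induction n with
  | zero => simp [blk]
  | succ n ih => rw [Finset.sum_range_succ, ih]; simp [blk]

lemma uD_open : IsOpen uD := isOpen_lt continuous_norm continuous_const

lemma mul_mem (κ : ℕ) {z : ℂ} (hz : z ∈ uD) : (rseq κ * z : ℂ) ∈ uD := by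
  have hz' : ‖z‖ < 1 := hz
  show ‖_‖ < 1
  rw [norm_mul, norm_rseq]
  have := rseq_lt_one κ
  have := rseq_nonneg κ
  nlinarith [norm_nonneg z]

lemma norm_rseq_mul_le (κ : ℕ) {z : ℂ} (hz : z ∈ uD) : ‖(rseq κ * z : ℂ)‖ ≤ rseq κ := by
  have hz' : ‖z‖ < 1 := hz
  rw [norm_mul, norm_rseq]
  have := rseq_nonneg κ
  nlinarith [norm_nonneg z]

lemma holo_blk {f : ℂ → ℂ} (hf : Holo f) (κ : ℕ) : Holo (blk f κ) := by
  have h : ∀ κ, DifferentiableOn ℂ (fun z : ℂ => f (rseq κ * z)) uD := fun κ =>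
    DifferentiableOn.comp (g := f) (t := uD) hf
      (differentiable_id.const_mul (rseq κ : ℂ)).differentiableOn (fun z hz => mul_mem κ hz)
  cases κ with
  | zero => exact h 0
  | succ κ => exact (h (κ + 1)).sub (h κ)

lemma f_bound {v : ℂ → ℝ} (hv : IsWeight v) (hn : NonInc v) {f : ℂ → ℂ}
    (hfv : ∀ z ∈ uD, v z * ‖f z‖ ≤ 1) (κ : ℕ) {z : ℂ} (hz : ‖z‖ ≤ rseq κ) :
    ‖f z‖ ≤ 1 / v (rseq κ) := by
  have hzD : z ∈ uD := lt_of_le_of_lt hz (rseq_lt_one κ)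
  have h1 : v (rseq κ) ≤ v z := hn _ hzD _ (rseq_mem κ) (by rwa [norm_rseq])
  have h2 := hv.2 _ (rseq_mem κ)
  rw [le_div_iff₀ h2]
  have := hfv z hzD
  nlinarith [norm_nonneg (f z)]

lemma blk_le {v : ℂ → ℝ} (hv : IsWeight v) (hn : NonInc v) {f : ℂ → ℂ}
    (hfv : ∀ z ∈ uD, v z * ‖f z‖ ≤ 1) (κ : ℕ) {z : ℂ} (hz : z ∈ uD) :
    ‖blk f κ z‖ ≤ 2 / v (rseq κ) := by
  have h2 := hv.2 _ (rseq_mem κ)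
  have h3 : 0 < 1 / v (rseq κ) := by positivity
  have h4 : 2 / v (rseq κ) = 1 / v (rseq κ) + 1 / v (rseq κ) := by ring
  rw [h4]
  cases κ with
  | zero =>
    have := f_bound hv hn hfv 0 (norm_rseq_mul_le 0 hz)
    simp only [blk]
    linarith
  | succ κ =>
    have h5 := f_bound hv hn hfv (κ + 1) (norm_rseq_mul_le (κ + 1) hz)
    have h6 := f_bound hv hn hfv (κ + 1)
      ((norm_rseq_mul_le κ hz).trans (rseq_mono (Nat.le_succ κ)))
    exact (norm_sub_le _ _).trans (add_le_add h5 h6)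

lemma blk_tail {v : ℂ → ℝ} (hv : IsWeight v) (hn : NonInc v) {f : ℂ → ℂ} (hf : Holo f)
    (hfv : ∀ z ∈ uD, v z * ‖f z‖ ≤ 1) (j i : ℕ) {z : ℂ} (hz : ‖z‖ ≤ rseq j) :
    ‖blk f (j + i + 1) z‖ ≤ 4 / 3 * dseq i / v (rseq (j + i + 1)) := by
  have hVpos := hv.2 _ (rseq_mem (j + i + 1))
  have hdj := dseq_pos j
  have hdi := dseq_pos i
  set R := rseq (j + 1) - rseq j with hR
  have hR34 : 3 / 4 * dseq j ≤ R := by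
    have := dseq_succ_le j
    unfold dseq at *
    linarith
  have hRpos : 0 < R := by nlinarith
  have hzD : z ∈ uD := lt_of_le_of_lt hz (rseq_lt_one j)
  have hz1 : ‖z‖ < 1 := hzD
  have hmem : ∀ ζ ∈ Metric.closedBall (0 : ℂ) (rseq j), ζ ∈ uD := by
    intro ζ hζ
    rw [mem_closedBall_zero_iff] at hζ
    exact lt_of_le_of_lt hζ (rseq_lt_one j)
  have hder : ∀ ζ ∈ Metric.closedBall (0 : ℂ) (rseq j),
      ‖deriv f ζ‖ ≤ (1 / v (rseq (j + i + 1))) / R := by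
    intro ζ hζ
    rw [mem_closedBall_zero_iff] at hζ
    have hball : ∀ x ∈ Metric.closedBall ζ R, ‖x‖ ≤ rseq (j + 1) := by
      intro x hx
      rw [mem_closedBall_iff_norm] at hx
      have : ‖x‖ ≤ ‖x - ζ‖ + ‖ζ‖ := by simpa using norm_add_le (x - ζ) ζ
      linarith
    apply Complex.norm_deriv_le_of_forall_mem_sphere_norm_le hRpos
    · apply DifferentiableOn.diffContOnCl
      rw [closure_ball _ hRpos.ne']
      exact hf.mono (fun x hx => lt_of_le_of_lt (hball x hx) (rseq_lt_one _))
    · intro x hx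
      apply f_bound hv hn hfv
      exact (hball x (Metric.sphere_subset_closedBall hx)).trans (rseq_mono (by omega))
  have hin : ∀ κ, (rseq κ * z : ℂ) ∈ Metric.closedBall (0 : ℂ) (rseq j) := by
    intro κ
    rw [mem_closedBall_zero_iff, norm_mul, norm_rseq]
    have := rseq_lt_one κ
    nlinarith [norm_nonneg z]
  have hmv := Convex.norm_image_sub_le_of_norm_deriv_le (f := f)
    (fun x hx => (hf x (hmem x hx)).differentiableAt (uD_open.mem_nhds (hmem x hx)))
    hder (convex_closedBall _ _) (hin (j + i)) (hin (j + i + 1))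
  have hdist : ‖(rseq (j + i + 1) * z - rseq (j + i) * z : ℂ)‖ ≤ dseq j * dseq i := by
    rw [← sub_mul, norm_mul, ← Complex.ofReal_sub, Complex.norm_real,
      Real.norm_of_nonneg (sub_nonneg.2 (rseq_mono (Nat.le_succ _)))]
    have h1 := dseq_add j i
    have h2 := dseq_pos (j + i + 1)
    have h3 : rseq (j + i + 1) - rseq (j + i) ≤ dseq (j + i) := by
      unfold dseq at *; linarith
    have h4 := sub_nonneg.2 (rseq_mono (Nat.le_succ (j + i)))
    simp only [Nat.succ_eq_add_one] at h4
    nlinarith [norm_nonneg z]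
  show ‖f _ - f _‖ ≤ _
  refine hmv.trans ?_
  calc (1 / v (rseq (j + i + 1))) / R * ‖(rseq (j + i + 1) * z - rseq (j + i) * z : ℂ)‖
      ≤ (1 / v (rseq (j + i + 1))) / (3 / 4 * dseq j) * (dseq j * dseq i) := by gcongr
    _ = _ := by field_simp

open Classical in
/-- The part of `f` with blocks in `J`. -/
def part (f : ℂ → ℂ) (J : Set ℕ) (z : ℂ) : ℂ :=
  ∑' κ, (if κ ∈ J then blk f κ z else 0)

/-- Uniform summable bound for the blocks on a disc of radius `r_j`. -/
lemma unif_bound {A : ℝ} (hA : 1 < A) {v : ℂ → ℝ} (hv : IsWeight v) (hn : NonInc v)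
    (hl : Log1 A v) {f : ℂ → ℂ} (hf : Holo f)
    (hfv : ∀ z ∈ uD, v z * ‖f z‖ ≤ 1) (j : ℕ) :
    ∃ u : ℕ → ℝ, Summable u ∧ ∀ κ z, ‖z‖ ≤ rseq j → ‖blk f κ z‖ ≤ u κ := by
  refine ⟨fun κ => if κ ≤ j then 2 / v (rseq κ) else
    4 / 3 / v (rseq j) * (dseq (κ - j - 1) * A ^ (κ - j - 1 + 1)), ?_, ?_⟩
  · rw [← summable_nat_add_iff (j + 1)]
    have := (summable_dseq A hA).mul_left (4 / 3 / v (rseq j))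
    refine this.congr (fun i => ?_)
    rw [if_neg (by omega)]
    have : i + (j + 1) - j - 1 = i := by omega
    rw [this]
  · intro κ z hz
    have hzD : z ∈ uD := lt_of_le_of_lt hz (rseq_lt_one j)
    by_cases hκ : κ ≤ j
    · simp only [if_pos hκ]
      exact blk_le hv hn hfv κ hzD
    · simp only [if_neg hκ]
      obtain ⟨i, rfl⟩ : ∃ i, κ = j + i + 1 := ⟨κ - j - 1, by omega⟩
      have e : j + i + 1 - j - 1 = i := by omega
      rw [e]
      refine (blk_tail hv hn hf hfv j i hz).trans ?_
      have h1 := hv.2 _ (rseq_mem (j + i + 1))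
      have h2 := hv.2 _ (rseq_mem j)
      have h3 := log1_iter hA hl j (i + 1)
      have h4 := dseq_pos i
      rw [div_mul_eq_mul_div (4 / 3) (v (rseq j)), div_le_div_iff₀ h1 h2]
      calc 4 / 3 * dseq i * v (rseq j) ≤ 4 / 3 * dseq i * (A ^ (i + 1) * v (rseq (j + (i + 1)))) := by
            gcongr
        _ = _ := by ring_nf

lemma summable_part {A : ℝ} (hA : 1 < A) {v : ℂ → ℝ} (hv : IsWeight v) (hn : NonInc v)
    (hl : Log1 A v) {f : ℂ → ℂ} (hf : Holo f)
    (hfv : ∀ z ∈ uD, v z * ‖f z‖ ≤ 1) {z : ℂ} (hz : z ∈ uD) :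
    Summable (fun κ => ‖blk f κ z‖) := by
  obtain ⟨j, hj, _⟩ := exists_shell hz A hA
  obtain ⟨u, hu, hb⟩ := unif_bound hA hv hn hl hf hfv j
  exact Summable.of_nonneg_of_le (fun _ => norm_nonneg _) (fun κ => hb κ z hj) hu

lemma holo_part {A : ℝ} (hA : 1 < A) {v : ℂ → ℝ} (hv : IsWeight v) (hn : NonInc v)
    (hl : Log1 A v) {f : ℂ → ℂ} (hf : Holo f)
    (hfv : ∀ z ∈ uD, v z * ‖f z‖ ≤ 1) (J : Set ℕ) : Holo (part f J) := by
  classical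
  intro z hz
  apply DifferentiableAt.differentiableWithinAt
  have hz' : ‖z‖ < 1 := hz
  obtain ⟨j, hj⟩ := (rseq_tendsto.eventually (lt_mem_nhds hz')).exists
  obtain ⟨u, hu, hb⟩ := unif_bound hA hv hn hl hf hfv j
  have hd : DifferentiableOn ℂ (part f J) (Metric.ball 0 (rseq j)) := by
    unfold part
    apply differentiableOn_tsum_of_summable_norm hu
    · intro κ
      by_cases h : κ ∈ J
      · simp only [if_pos h]
        refine (holo_blk hf κ).mono (fun x hx => ?_)
        rw [mem_ball_zero_iff] at hx
        exact hx.trans (rseq_lt_one j)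
      · simp only [if_neg h]
        exact differentiableOn_const _
    · exact Metric.isOpen_ball
    · intro κ x hx
      rw [mem_ball_zero_iff] at hx
      have := hb κ x hx.le
      split_ifs
      · exact this
      · simpa using (norm_nonneg _).trans this
  exact hd.differentiableAt (Metric.isOpen_ball.mem_nhds (by rwa [mem_ball_zero_iff]))

lemma part_add {A : ℝ} (hA : 1 < A) {v : ℂ → ℝ} (hv : IsWeight v) (hn : NonInc v)
    (hl : Log1 A v) {f : ℂ → ℂ} (hf : Holo f)
    (hfv : ∀ z ∈ uD, v z * ‖f z‖ ≤ 1) (J : Set ℕ) {z : ℂ} (hz : z ∈ uD) :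
    f z = part f J z + part f Jᶜ z := by
  classical
  have hs := summable_part hA hv hn hl hf hfv hz
  have hsJ : ∀ J : Set ℕ, Summable (fun κ => if κ ∈ J then blk f κ z else 0) := fun J =>
    Summable.of_norm_bounded hs (fun κ => by split_ifs <;> simp)
  unfold part
  have hadd := ((hsJ J).tsum_add (hsJ Jᶜ)).symm
  refine Eq.trans ?_ (Eq.trans hadd.symm (by congr!))
  refine Eq.trans ?_ (tsum_congr (f := fun κ => blk f κ z) (fun κ => ?_))
  swap
  · by_cases h : κ ∈ J <;> simp [h]
  have h1 := (hs.of_norm.hasSum.tendsto_sum_nat).comp (Filter.tendsto_add_atTop_nat 1)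
  have h2 : Filter.Tendsto (fun n => f (rseq n * z)) Filter.atTop (nhds (f z)) := by
    have hc : ContinuousAt f z := (hf.differentiableAt (uD_open.mem_nhds hz)).continuousAt
    have ht : Filter.Tendsto (fun n => (rseq n * z : ℂ)) Filter.atTop (nhds z) := by
      have := ((Complex.continuous_ofReal.tendsto 1).comp rseq_tendsto).mul_const z
      simpa using this
    exact hc.tendsto.comp ht
  have h3 : (fun n => ∑ i ∈ Finset.range n, blk f i z) ∘ (fun a => a + 1)
      = fun n => f (rseq n * z) := by
    funext n; exact sum_blk f z n
  rw [h3] at h1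
  exact tendsto_nhds_unique h2 h1

lemma part_bound (a A : ℝ) (ha0 : 0 < a) (ha1 : a < 1) (hA : 1 < A) :
    ∃ C > 0, ∀ v w : ℂ → ℝ, IsWeight v → NonInc v → Log1 A v →
      IsWeight w → NonInc w → Log1 A w → Log2 a w →
      ∀ f : ℂ → ℂ, Holo f → (∀ z ∈ uD, v z * ‖f z‖ ≤ 1) →
      ∀ (J : Set ℕ) (T : ℝ), 0 < T → (∀ κ ∈ J, 1 / v (rseq κ) ≤ T / w (rseq κ)) →
      ∀ z ∈ uD, w z * ‖part f J z‖ ≤ C * T := by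
  classical
  set D := ∑' i, dseq i * A ^ (i + 1) with hD
  have hsum := summable_dseq A hA
  have hDnn : 0 ≤ D := tsum_nonneg (fun i => by have := dseq_pos i; positivity)
  have h1a : 0 < 1 - a := by linarith
  refine ⟨A * (2 / (1 - a) + 4 / 3 * D), by positivity, ?_⟩
  intro v w hv hnv hlv hw hnw hl1 hl2 f hf hfv J T hT hJ z hz
  obtain ⟨j, hj, hw'⟩ := exists_shell hz A hA
  have hwz := (hw' w hw hnw hl1).1
  have hWj := hw.2 _ (rseq_mem j)
  set G : ℕ → ℂ := fun κ => if κ ∈ J then blk f κ z else 0 with hG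
  have hs := summable_part hA hv hnv hlv hf hfv hz
  have hGs : Summable G := Summable.of_norm_bounded hs (fun κ => by
    simp only [hG]; split_ifs <;> simp)
  have hpart : part f J z = ∑' κ, G κ := by
    unfold part; simp only [hG]
  have hhead : ∀ κ ∈ Finset.range (j + 1), ‖G κ‖ ≤ 2 * T / w (rseq j) * a ^ (j - κ) := by
    intro κ hκ
    rw [Finset.mem_range] at hκ
    simp only [hG]
    split_ifs with h
    · have hWκ := hw.2 _ (rseq_mem κ)
      have h1 := blk_le hv hnv hfv κ hz
      have h2 := hJ κ h
      have h3 := log2_iter ha0 hl2 κ (j - κ)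
      rw [show κ + (j - κ) = j by omega] at h3
      calc ‖blk f κ z‖ ≤ 2 * (1 / v (rseq κ)) := by rw [mul_one_div]; exact h1
        _ ≤ 2 * (T / w (rseq κ)) := by gcongr
        _ = 2 * T / w (rseq κ) := by ring
        _ ≤ 2 * T / w (rseq j) * a ^ (j - κ) := by
          rw [div_mul_eq_mul_div, div_le_div_iff₀ hWκ hWj]
          calc 2 * T * w (rseq j) ≤ 2 * T * (a ^ (j - κ) * w (rseq κ)) := by gcongr
            _ = _ := by ring
    · rw [norm_zero]; positivity
  have htail : ∀ i, ‖G (i + (j + 1))‖ ≤ 4 / 3 * T / w (rseq j) * (dseq i * A ^ (i + 1)) := by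
    intro i
    have hdi := dseq_pos i
    rw [show i + (j + 1) = j + i + 1 by ring]
    simp only [hG]
    split_ifs with h
    · have hWκ := hw.2 _ (rseq_mem (j + i + 1))
      have h1 := blk_tail hv hnv hf hfv j i hj
      have h2 := hJ _ h
      have h3 := log1_iter hA hl1 j (i + 1)
      calc ‖blk f (j + i + 1) z‖ ≤ 4 / 3 * dseq i * (1 / v (rseq (j + i + 1))) := by
            rw [mul_one_div]; exact h1
        _ ≤ 4 / 3 * dseq i * (T / w (rseq (j + i + 1))) := by gcongr
        _ = 4 / 3 * T * dseq i / w (rseq (j + i + 1)) := by ring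
        _ ≤ _ := by
          rw [div_mul_eq_mul_div (4 / 3 * T) (w (rseq j)), div_le_div_iff₀ hWκ hWj]
          calc 4 / 3 * T * dseq i * w (rseq j)
              ≤ 4 / 3 * T * dseq i * (A ^ (i + 1) * w (rseq (j + (i + 1)))) := by gcongr
            _ = _ := by ring_nf
    · rw [norm_zero]; positivity
  have hsumhead : ‖∑ κ ∈ Finset.range (j + 1), G κ‖ ≤ 2 * T / w (rseq j) * (1 / (1 - a)) := by
    refine (norm_sum_le_of_le _ hhead).trans ?_
    rw [← Finset.mul_sum]
    gcongr
    have : ∑ κ ∈ Finset.range (j + 1), a ^ (j - κ) = ∑ κ ∈ Finset.range (j + 1), a ^ κ := by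
      have := Finset.sum_range_reflect (fun κ => a ^ κ) (j + 1)
      simpa using this
    rw [this, one_div, ← tsum_geometric_of_lt_one ha0.le ha1]
    exact (summable_geometric_of_lt_one ha0.le ha1).sum_le_tsum _ (fun i _ => by positivity)
  have hsumtail : ‖∑' i, G (i + (j + 1))‖ ≤ 4 / 3 * T / w (rseq j) * D :=
    tsum_of_norm_bounded (hsum.hasSum.mul_left _) htail
  have htot : ‖part f J z‖ ≤ 2 * T / w (rseq j) * (1 / (1 - a)) + 4 / 3 * T / w (rseq j) * D := by
    rw [hpart, ← hGs.sum_add_tsum_nat_add (j + 1)]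
    exact (norm_add_le _ _).trans (add_le_add hsumhead hsumtail)
  calc w z * ‖part f J z‖ ≤ (A * w (rseq j)) *
        (2 * T / w (rseq j) * (1 / (1 - a)) + 4 / 3 * T / w (rseq j) * D) := by gcongr
    _ = _ := by field_simp

lemma growthTilde_le {w : ℂ → ℝ} {z : ℂ} (hz : z ∈ uD) (hw : 0 ≤ w z) :
    growthTilde w z ≤ w z := by
  apply Real.sSup_le _ hw
  rintro t ⟨g, _, hg, rfl⟩
  exact hg z hz

/-- (LOG) + (Q)~ implies condition (P̄₂) for the spectrum:
every f in B_{M,m} decomposes as f = g + h with ‖g‖_{a_{N,n}} ≤ ε and ‖h‖_{a_{K,k}} ≤ S. -/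
theorem condQTilde_implies_P2bar (a' A : ℝ) (ha0 : 0 < a') (ha1 : a' < 1) (hA : 1 < A)
    (a : ℕ → ℕ → ℂ → ℝ)
    (hW : ∀ N n, IsWeight (a N n))
    (hMono : MonoSeq a)
    (hLOG : SeqLOG a' A a)
    (hQ : CondQTilde a) :
    ∀ N, ∃ M ≥ N, ∃ n, ∀ K ≥ M, ∀ m, ∀ ε > 0, ∃ k, ∃ S > 0,
      ∀ f : ℂ → ℂ, Holo f → (∀ z ∈ uD, a M m z * ‖f z‖ ≤ 1) →
        ∃ g h : ℂ → ℂ, Holo g ∧ Holo h ∧ (∀ z ∈ uD, f z = g z + h z) ∧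
          (∀ z ∈ uD, a N n z * ‖g z‖ ≤ ε) ∧
          (∀ z ∈ uD, a K k z * ‖h z‖ ≤ S) := by
  obtain ⟨C₁, hC₁, hE⟩ := essential_aux A hA
  obtain ⟨C₂, hC₂, hP⟩ := part_bound a' A ha0 ha1 hA
  intro N
  obtain ⟨M, hMN, n, hQ⟩ := hQ N
  refine ⟨M, hMN, n, fun K hK m ε hε => ?_⟩
  obtain ⟨k, S, hS, hq⟩ := hQ K hK m (ε / (C₁ * C₂)) (by positivity)
  refine ⟨k, C₂ * (C₁ * S), by positivity, fun f hf hfv => ?_⟩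
  obtain ⟨_, hn1, _, hl1, _⟩ := hLOG M m
  obtain ⟨_, hn2, _, hl2, hg2⟩ := hLOG N n
  obtain ⟨_, hn3, _, hl3, hg3⟩ := hLOG K k
  set J : Set ℕ := {κ | 1 / a M m (rseq κ) ≤ (ε / C₂) / a N n (rseq κ)} with hJ
  have hJc : ∀ κ ∈ Jᶜ, 1 / a M m (rseq κ) ≤ (C₁ * S) / a K k (rseq κ) := by
    intro κ hκ
    have hp2 := (hW N n).2 _ (rseq_mem κ)
    have hp3 := (hW K k).2 _ (rseq_mem κ)
    have h1 := hE _ (hW M m) hn1 hl1 κ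
    have h2 := hq _ (rseq_mem κ)
    have h3 := growthTilde_le (w := fun x => max (ε / (C₁ * C₂) / a N n x) (S / a K k x))
      (rseq_mem κ) (le_max_of_le_right (by positivity))
    have h4 : 1 / a M m (rseq κ) ≤
        C₁ * max (ε / (C₁ * C₂) / a N n (rseq κ)) (S / a K k (rseq κ)) :=
      h1.trans (mul_le_mul_of_nonneg_left (h2.trans h3) hC₁.le)
    rcases max_cases (ε / (C₁ * C₂) / a N n (rseq κ)) (S / a K k (rseq κ)) with h | h
    · exfalso
      apply hκ
      show 1 / a M m (rseq κ) ≤ (ε / C₂) / a N n (rseq κ)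
      rw [h.1] at h4
      refine h4.trans (le_of_eq ?_)
      field_simp
    · rw [h.1] at h4
      rw [mul_div_assoc]
      exact h4
  refine ⟨part f J, part f Jᶜ, holo_part hA (hW M m) hn1 hl1 hf hfv J,
    holo_part hA (hW M m) hn1 hl1 hf hfv Jᶜ,
    fun z hz => part_add hA (hW M m) hn1 hl1 hf hfv J hz, fun z hz => ?_, fun z hz => ?_⟩
  · have := hP _ _ (hW M m) hn1 hl1 (hW N n) hn2 hl2 hg2 f hf hfv J (ε / C₂) (by positivity)
      (fun κ h => h) z hz
    rwa [mul_div_cancel₀ _ hC₂.ne'] at this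
  · exact hP _ _ (hW M m) hn1 hl1 (hW K k) hn3 hl3 hg3 f hf hfv Jᶜ (C₁ * S) (by positivity)
      hJc z hz
end
end

section
/- Let t ≥ 0 and κ ≥ t + 3 be integers and let η, ξ ∈ ℂ with |η| = r_κ and |ξ| ≤ r_{κ+1}·r_{t+1}. Then 1/|η − ξ|² ≤ 4·2^{2^{κ−1}}. -/
noncomputable section

open Complex

/-- for |η| = r_κ and |ξ| ≤ r_{κ+1}·r_{t+1} with κ ≥ t + 3,
one has 1/|η − ξ|² ≤ 4·2^{2^{κ−1}}. -/
theorem cauchy_kernel_estimate (t κ : ℕ) (h : t + 3 ≤ κ) (η ξ : ℂ)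
    (hη : ‖η‖ = rseq κ)
    (hξ : ‖ξ‖ ≤ rseq (κ + 1) * rseq (t + 1)) :
    1 / ‖η - ξ‖ ^ 2 ≤ 4 * 2 ^ 2 ^ (κ - 1) := by
  have e1 : rseq κ = 1 - 1 / 2 ^ (2 ^ κ) := by
    unfold rseq; rw [if_neg (by omega)]
  have e2 : rseq (t + 1) = 1 - 1 / 2 ^ (2 ^ (t + 1)) := by
    unfold rseq; rw [if_neg (by omega)]
  have e3 : rseq (κ + 1) ≤ 1 := by
    unfold rseq; rw [if_neg (by omega)]
    have : (0 : ℝ) ≤ 1 / 2 ^ (2 ^ (κ + 1)) := by positivity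
    linarith
  have hPP : (2 : ℝ) ^ (2 ^ κ) = (2 ^ (2 ^ (κ - 1))) ^ 2 := by
    rw [← pow_mul, ← pow_succ]
    congr 2
    omega
  have hPQ : ((2 : ℝ) ^ (2 ^ (t + 1))) ^ 2 ≤ 2 ^ (2 ^ (κ - 1)) := by
    rw [← pow_mul, ← pow_succ]
    apply pow_le_pow_right₀ (by norm_num)
    exact Nat.pow_le_pow_right (by norm_num) (by omega)
  have hQ2 : (2 : ℝ) ≤ 2 ^ (2 ^ (t + 1)) := by
    exact le_self_pow₀ (by norm_num) (by positivity)
  have hd : ‖η‖ - ‖ξ‖ ≤ ‖η - ξ‖ := norm_sub_norm_le η ξ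
  rw [e1, hPP] at hη
  generalize (2 : ℝ) ^ (2 ^ (κ - 1)) = P at *
  rw [e2] at hξ
  generalize (2 : ℝ) ^ (2 ^ (t + 1)) = Q at *
  have hQ0 : 0 < Q := by linarith
  have hr : 0 ≤ 1 - 1 / Q := by
    rw [sub_nonneg, div_le_one hQ0]; linarith
  have hξ' : ‖ξ‖ ≤ 1 - 1 / Q := hξ.trans (mul_le_of_le_one_left hr e3)
  have hP0 : 0 < P := by nlinarith
  have hP3 : 2 * Q ≤ P := by nlinarith
  have hP2 : 2 * Q ≤ P ^ 2 := by nlinarith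
  have h1 : 1 / P ^ 2 ≤ 1 / (2 * Q) := one_div_le_one_div_of_le (by positivity) hP2
  have h2 : 1 / Q = 2 * (1 / (2 * Q)) := by field_simp
  have h3 : 1 / (2 * Q) ≤ ‖η - ξ‖ := by linarith
  have h4 : (1 / (2 * Q)) ^ 2 ≤ ‖η - ξ‖ ^ 2 := by gcongr
  calc 1 / ‖η - ξ‖ ^ 2 ≤ 1 / (1 / (2 * Q)) ^ 2 :=
        one_div_le_one_div_of_le (by positivity) h4
    _ = 4 * Q ^ 2 := by field_simp; norm_num
    _ ≤ 4 * P := by linarith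
end
end

section
/- Let u be a radial non-increasing weight on 𝔻 and let f be holomorphic on 𝔻 with u(z)|f(z)| ≤ 1 for all z ∈ 𝔻. Then for all integers t ≥ 0 and κ ≥ t + 3 and every ξ ∈ ℂ with |ξ| ≤ r_{κ+1}·r_{t+1}, the derivative satisfies |f′(ξ)| ≤ 4·2^{2^{κ−1}}/u(r_κ). -/
noncomputable section

open Complex

/-- derivative estimate |f′(ξ)| ≤ 4·2^{2^{κ−1}}/u(r_κ). -/
theorem derivative_estimate (u : ℂ → ℝ) (hw : IsWeight u) (hrad : Radial u) (hni : NonInc u)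
    (f : ℂ → ℂ) (hf : Holo f) (hbd : ∀ z ∈ uD, u z * ‖f z‖ ≤ 1)
    (t κ : ℕ) (h : t + 3 ≤ κ) (ξ : ℂ)
    (hξ : ‖ξ‖ ≤ rseq (κ + 1) * rseq (t + 1)) :
    ‖deriv f ξ‖ ≤ 4 * 2 ^ 2 ^ (κ - 1) / u (rseq κ : ℂ) := by
  obtain ⟨n, rfl⟩ : ∃ n, κ = n + 1 := ⟨κ - 1, by omega⟩
  have hn : n + 1 - 1 = n := rfl
  rw [hn]
  set b : ℝ := 2 ^ 2 ^ n with hb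
  have hb4 : (4 : ℝ) ≤ b := by
    have h1 : 2 ≤ 2 ^ n := by
      calc 2 = 2 ^ 1 := rfl
        _ ≤ 2 ^ n := Nat.pow_le_pow_right (by norm_num) (by omega)
    calc (4 : ℝ) = 2 ^ 2 := by norm_num
      _ ≤ 2 ^ 2 ^ n := pow_le_pow_right₀ (by norm_num) h1
  have hb0 : (0 : ℝ) < b := by linarith
  have hrk : rseq (n + 1) = 1 - 1 / b ^ 2 := by
    simp only [rseq, hb]
    rw [if_neg (by omega), ← pow_mul, ← pow_succ]
  have hrt : rseq (t + 1) ≤ 1 - 1 / b := by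
    simp only [rseq, hb]
    rw [if_neg (by omega)]
    have h1 : (2 : ℝ) ^ 2 ^ (t + 1) ≤ 2 ^ 2 ^ n :=
      pow_le_pow_right₀ (by norm_num) (Nat.pow_le_pow_right (by norm_num) (by omega))
    have := one_div_le_one_div_of_le (by positivity) h1
    linarith
  have hrt0 : 0 ≤ rseq (t + 1) := by
    simp only [rseq]
    rw [if_neg (by omega)]
    have h1 : (1 : ℝ) ≤ 2 ^ 2 ^ (t + 1) := one_le_pow₀ (by norm_num)
    have := (div_le_one (by linarith)).2 h1
    linarith
  have hr1 : rseq (n + 1 + 1) ≤ 1 := by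
    simp only [rseq]
    rw [if_neg (by omega)]
    have : (0 : ℝ) < 1 / 2 ^ 2 ^ (n + 1 + 1) := by positivity
    linarith
  have hx : ‖ξ‖ ≤ 1 - 1 / b := by nlinarith
  set c : ℝ := 1 / b with hc
  have hc0 : 0 < c := by positivity
  have hc4 : c ≤ 1 / 4 := one_div_le_one_div_of_le (by norm_num) hb4
  have hrk' : rseq (n + 1) = 1 - c ^ 2 := by rw [hrk, hc]; ring
  have hrlt : rseq (n + 1) < 1 := by rw [hrk']; nlinarith
  have hr0 : 0 ≤ rseq (n + 1) := by rw [hrk']; nlinarith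
  have hnr : ‖((rseq (n + 1) : ℝ) : ℂ)‖ = rseq (n + 1) := by
    rw [Complex.norm_real, Real.norm_of_nonneg hr0]
  have hrD : ((rseq (n + 1) : ℝ) : ℂ) ∈ uD := by
    change ‖((rseq (n + 1) : ℝ) : ℂ)‖ < 1
    rw [hnr]; exact hrlt
  have hu0 := hw.2 _ hrD
  have hball : ∀ z ∈ Metric.closedBall ξ (c / 4), ‖z‖ ≤ rseq (n + 1) := by
    intro z hz
    rw [mem_closedBall_iff_norm] at hz
    have h1 : ‖z‖ ≤ ‖z - ξ‖ + ‖ξ‖ := by simpa using norm_add_le (z - ξ) ξ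
    rw [hrk']; nlinarith
  have hd : DiffContOnCl ℂ f (Metric.ball ξ (c / 4)) := by
    apply DifferentiableOn.diffContOnCl
    refine hf.mono fun z hz => ?_
    exact lt_of_le_of_lt (hball z (Metric.closure_ball_subset_closedBall hz)) hrlt
  have key := Complex.norm_deriv_le_of_forall_mem_sphere_norm_le (c := ξ) (R := c / 4)
    (C := 1 / u (rseq (n + 1) : ℂ)) (by positivity) hd (by
      intro z hz
      have hz1 := hball z (Metric.sphere_subset_closedBall hz)
      have hzD : z ∈ uD := lt_of_le_of_lt hz1 hrlt
      have h1 := hni z hzD _ hrD (by rw [hnr]; exact hz1)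
      rw [le_div_iff₀ hu0]
      have h2 := hbd z hzD
      nlinarith [norm_nonneg (f z)])
  refine key.trans (le_of_eq ?_)
  rw [hc]
  field_simp
end
end

section
/- Let A > 1 and let u be a radial non-increasing weight on 𝔻 satisfying (LOG 1) with constant A. Let f be holomorphic on 𝔻 with u(z)|f(z)| ≤ 1 for all z ∈ 𝔻. Let t ≥ 0 be an integer and z ∈ 𝔻 with r_t ≤ |z| ≤ r_{t+1}. Then for every integer κ > t + 2 one has |f(r_{κ+1}z) − f(r_κ z)| ≤ 4·A^{κ−t}·2^{−2^{κ−1}}/u(z), and for κ = t + 2 one has |f(r_{κ+1}z) − f(r_κ z)| ≤ 4·A²/u(z). -/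
noncomputable section

open Complex

lemma rseq_succ_aux (k : ℕ) : rseq (k + 1) = 1 - 1 / 2 ^ (2 ^ (k + 1)) := by
  simp [rseq]

lemma rseq_nonneg_aux (k : ℕ) : 0 ≤ rseq k := by
  unfold rseq
  split_ifs
  · exact le_rfl
  · have h : (1 : ℝ) ≤ 2 ^ (2 ^ k) := one_le_pow₀ (by norm_num)
    have := (div_le_one (by positivity)).2 h
    linarith

lemma rseq_lt_one_aux (k : ℕ) : rseq k < 1 := by
  unfold rseq
  split_ifs
  · norm_num
  · have : (0 : ℝ) < 1 / 2 ^ (2 ^ k) := by positivity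
    linarith

lemma rseq_norm_aux (k : ℕ) : ‖(rseq k : ℂ)‖ = rseq k := by
  rw [Complex.norm_real, Real.norm_of_nonneg (rseq_nonneg_aux k)]

lemma rseq_mem_aux (k : ℕ) : (rseq k : ℂ) ∈ uD := by
  change ‖(rseq k : ℂ)‖ < 1
  rw [rseq_norm_aux]; exact rseq_lt_one_aux k

lemma rseq_mul_aux (k : ℕ) (z : ℂ) : ‖(rseq k : ℂ) * z‖ ≤ ‖z‖ := by
  rw [norm_mul, rseq_norm_aux]
  exact mul_le_of_le_one_left (norm_nonneg _) (rseq_lt_one_aux k).le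

/-- for r_t ≤ |z| ≤ r_{t+1}: |f(r_{κ+1}z) − f(r_κ z)| ≤ 4·A^{κ−t}·2^{−2^{κ−1}}/u(z)
for κ > t + 2, and ≤ 4A²/u(z) for κ = t + 2. -/
theorem difference_estimate_inner (A : ℝ) (hA : 1 < A) (u : ℂ → ℝ)
    (hw : IsWeight u) (hrad : Radial u) (hni : NonInc u) (hl : Log1 A u)
    (f : ℂ → ℂ) (hf : Holo f) (hbd : ∀ z ∈ uD, u z * ‖f z‖ ≤ 1)
    (t : ℕ) (z : ℂ) (hz : z ∈ uD)
    (hz1 : rseq t ≤ ‖z‖) (hz2 : ‖z‖ ≤ rseq (t + 1)) :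
    (∀ κ : ℕ, t + 2 < κ →
      ‖f ((rseq (κ + 1) : ℂ) * z) - f ((rseq κ : ℂ) * z)‖ ≤
        4 * A ^ (κ - t) / 2 ^ 2 ^ (κ - 1) / u z) ∧
    ‖f ((rseq (t + 3) : ℂ) * z) - f ((rseq (t + 2) : ℂ) * z)‖ ≤
      4 * A ^ 2 / u z := by
  have hzn : ‖z‖ < 1 := hz
  have huz : 0 < u z := hw.2 z hz
  have hA2 : 1 ≤ A ^ 2 := one_le_pow₀ hA.le
  constructor
  · intro κ hκ
    obtain ⟨j, rfl⟩ : ∃ j, κ = j + 1 := ⟨κ - 1, by omega⟩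
    obtain ⟨a, ha⟩ : ∃ a : ℝ, a = 2 ^ (2 ^ (t + 1)) := ⟨_, rfl⟩
    obtain ⟨b, hb⟩ : ∃ b : ℝ, b = 2 ^ (2 ^ j) := ⟨_, rfl⟩
    have ha4 : 4 ≤ a := by
      have h1 : 2 ≤ 2 ^ (t + 1) := by
        have := Nat.one_le_two_pow (n := t)
        rw [pow_succ]; omega
      calc (4 : ℝ) = 2 ^ 2 := by norm_num
        _ ≤ a := ha ▸ pow_le_pow_right₀ (by norm_num) h1
    have hab : a ≤ b := by
      rw [ha, hb]
      exact pow_le_pow_right₀ (by norm_num) (Nat.pow_le_pow_right (by norm_num) (by omega))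
    have hb0 : 0 < b := by linarith
    have ha0 : 0 < a := by linarith
    have r1 : rseq (t + 1) = 1 - 1 / a := by rw [rseq_succ_aux, ha]
    have r2 : rseq (t + 2) = 1 - 1 / a ^ 2 := by
      rw [rseq_succ_aux, ha, ← pow_mul, ← pow_succ]
    have r3 : rseq (j + 1) = 1 - 1 / b ^ 2 := by
      rw [rseq_succ_aux, hb, ← pow_mul, ← pow_succ]
    have r4 : rseq (j + 1 + 1) = 1 - 1 / b ^ 4 := by
      rw [rseq_succ_aux, hb, ← pow_mul]
      congr 3
      ring
    have hu2 : 0 < u (rseq (t + 2) : ℂ) := hw.2 _ (rseq_mem_aux _)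
    have huu : u z ≤ A ^ 2 * u (rseq (t + 2) : ℂ) := by
      have h1 := hni _ (rseq_mem_aux t) z hz (by rw [rseq_norm_aux]; exact hz1)
      have h2 := hl t
      have h3 := mul_le_mul_of_nonneg_left (hl (t + 1)) (by linarith : 0 ≤ A)
      calc u z ≤ _ := h1
        _ ≤ _ := h2
        _ ≤ _ := h3
        _ = _ := by ring
    have hfb : ∀ w : ℂ, ‖w‖ ≤ rseq (t + 2) → ‖f w‖ ≤ A ^ 2 / u z := by
      intro w hw2
      have hwD : w ∈ uD := lt_of_le_of_lt hw2 (rseq_lt_one_aux _)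
      have h1 := hni w hwD _ (rseq_mem_aux (t + 2)) (by rw [rseq_norm_aux]; exact hw2)
      have h2 := hbd w hwD
      rw [le_div_iff₀ huz]
      have h3 : u z ≤ A ^ 2 * u w := huu.trans (by gcongr)
      calc ‖f w‖ * u z ≤ ‖f w‖ * (A ^ 2 * u w) := by gcongr
        _ = A ^ 2 * (u w * ‖f w‖) := by ring
        _ ≤ A ^ 2 * 1 := by gcongr
        _ = _ := by ring
    obtain ⟨ρ, hρ⟩ : ∃ ρ : ℝ, ρ = 1 / (4 * a) := ⟨_, rfl⟩
    have hρ0 : 0 < ρ := by rw [hρ]; positivity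
    have hρr : rseq (t + 1) + ρ ≤ rseq (t + 2) := by
      rw [r1, r2, hρ]
      have h1 : 1 / a ^ 2 ≤ 1 / (4 * a) := by
        apply one_div_le_one_div_of_le (by positivity)
        nlinarith
      have h2 : 1 / (4 * a) = (1 / a) / 4 := by field_simp
      have h3 : 0 < 1 / a := by positivity
      linarith
    have hopen : IsOpen uD := isOpen_lt continuous_norm continuous_const
    have hball : ∀ w : ℂ, ‖w‖ ≤ ‖z‖ → ∀ x ∈ Metric.closedBall w ρ, ‖x‖ ≤ rseq (t + 2) := by
      intro w hw1 x hx
      rw [mem_closedBall_iff_norm] at hx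
      have := norm_le_norm_add_norm_sub w x
      rw [norm_sub_rev] at this
      have h2 : ‖x‖ ≤ ‖w‖ + ‖x - w‖ := by
        calc ‖x‖ = ‖w + (x - w)‖ := by congr 1; ring
          _ ≤ _ := norm_add_le _ _
      linarith
    have hder : ∀ w ∈ Metric.closedBall (0 : ℂ) ‖z‖, ‖deriv f w‖ ≤ A ^ 2 / u z / ρ := by
      intro w hw1
      rw [mem_closedBall_zero_iff] at hw1
      apply Complex.norm_deriv_le_of_forall_mem_sphere_norm_le hρ0
      · apply DifferentiableOn.diffContOnCl_ball (U := uD) hf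
        intro x hx
        exact lt_of_le_of_lt (hball w hw1 x hx) (rseq_lt_one_aux _)
      · intro x hx
        exact hfb x (hball w hw1 x (Metric.sphere_subset_closedBall hx))
    have key := (convex_closedBall (0 : ℂ) ‖z‖).norm_image_sub_le_of_norm_deriv_le
      (f := f) (𝕜 := ℂ) (x := (rseq (j + 1) : ℂ) * z) (y := (rseq (j + 1 + 1) : ℂ) * z)
      (fun w hw1 => by
        rw [mem_closedBall_zero_iff] at hw1
        exact hf.differentiableAt (hopen.mem_nhds (lt_of_le_of_lt hw1 hzn)))
      hder (by rw [mem_closedBall_zero_iff]; exact rseq_mul_aux _ _)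
      (by rw [mem_closedBall_zero_iff]; exact rseq_mul_aux _ _)
    refine key.trans ?_
    have hd : ‖(rseq (j + 1 + 1) : ℂ) * z - (rseq (j + 1) : ℂ) * z‖ ≤ 1 / b ^ 2 := by
      rw [← sub_mul, norm_mul, ← Complex.ofReal_sub, Complex.norm_real]
      have h4 : (0 : ℝ) < 1 / b ^ 4 := by positivity
      have h5 : 1 / b ^ 4 ≤ 1 / b ^ 2 := by
        apply one_div_le_one_div_of_le (by positivity)
        exact pow_le_pow_right₀ (by linarith) (by norm_num)
      have h6 : ‖rseq (j + 1 + 1) - rseq (j + 1)‖ ≤ 1 / b ^ 2 := by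
        rw [r3, r4, Real.norm_of_nonneg (by linarith)]
        linarith
      calc _ ≤ 1 / b ^ 2 * 1 := by gcongr
        _ = _ := mul_one _
    have hAp : A ^ 2 ≤ A ^ (j + 1 - t) := pow_le_pow_right₀ hA.le (by omega)
    rw [Nat.add_sub_cancel, ← hb]
    calc A ^ 2 / u z / ρ * ‖(rseq (j + 1 + 1) : ℂ) * z - (rseq (j + 1) : ℂ) * z‖
        ≤ A ^ 2 / u z / ρ * (1 / b ^ 2) := by gcongr
      _ = 4 * A ^ 2 * (a / b ^ 2) / u z := by rw [hρ]; field_simp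
      _ ≤ 4 * A ^ 2 * (b / b ^ 2) / u z := by gcongr
      _ = 4 * A ^ 2 / b / u z := by field_simp
      _ ≤ _ := by gcongr
  · have hp : ∀ k, ‖f ((rseq k : ℂ) * z)‖ ≤ 1 / u z := by
      intro k
      have h1 := rseq_mul_aux k z
      have hD : (rseq k : ℂ) * z ∈ uD := lt_of_le_of_lt h1 hzn
      have h2 := hni _ hD z hz h1
      rw [le_div_iff₀ huz, mul_comm]
      exact (mul_le_mul_of_nonneg_right h2 (norm_nonneg _)).trans (hbd _ hD)
    calc _ ≤ _ := norm_sub_le _ _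
      _ ≤ 1 / u z + 1 / u z := add_le_add (hp _) (hp _)
      _ = 2 / u z := by ring
      _ ≤ _ := by gcongr; linarith
end
end

section
/- Let 𝒜 = ((a_{N,n})_{N∈ℕ})_{n∈ℕ} be a double sequence of weights on 𝔻 with a_{N,n+1} ≤ a_{N,n} ≤ a_{N+1,n} pointwise, satisfying conditions (LOG) and (Σ), and assume every weight a_{N,n} is essential. Then 𝒜 satisfies condition (Q) if and only if 𝒜 satisfies condition (wQ). -/
noncomputable section

open Complex

/-- under (LOG) and (Σ) with all weights essential, (Q) ⟺ (wQ). -/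
theorem condQ_iff_condwQ_essential (a' A : ℝ) (ha0 : 0 < a') (ha1 : a' < 1) (hA : 1 < A)
    (a : ℕ → ℕ → ℂ → ℝ)
    (hW : ∀ N n, IsWeight (a N n)) (hMono : MonoSeq a)
    (hLOG : SeqLOG a' A a) (hSigma : CondSigma a)
    (hEss : ∀ N n, Essential (a N n)) :
    CondQ a ↔ CondwQ a := by
  constructor
  · intro h N
    obtain ⟨M, hM, n, h⟩ := h N
    refine ⟨M, hM, n, fun K hK m => ?_⟩
    obtain ⟨k, S, hS, h⟩ := h K hK m 1 one_pos
    refine ⟨k, max 1 S, by positivity, fun z hz => (h z hz).trans ?_⟩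
    have h1 := (hW N n).2 z hz
    have h2 := (hW K k).2 z hz
    apply max_le_max
    · exact div_le_div_of_nonneg_right (le_max_left _ _) h1.le
    · exact div_le_div_of_nonneg_right (le_max_right _ _) h2.le
  · intro h N
    obtain ⟨N', hN', hs⟩ := hSigma N
    obtain ⟨M, hM, n', h⟩ := h N'
    obtain ⟨n, -, hs⟩ := hs n'
    refine ⟨M, le_trans hN' hM, n, fun K hK m ε hε => ?_⟩
    obtain ⟨k, S, hS, h⟩ := h K hK m
    obtain ⟨Q, hQc, hQ, hs⟩ := hs (ε / S) (by positivity)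
    have hcont : ContinuousOn (fun z => a K k z / a M m z) Q :=
      ((hW K k).1.mono hQ).div ((hW M m).1.mono hQ)
        (fun z hz => ((hW M m).2 z (hQ hz)).ne')
    obtain ⟨C, hC⟩ := hQc.bddAbove_image hcont
    refine ⟨k, max S C, lt_max_of_lt_left hS, fun z hz => ?_⟩
    have h1 := (hW N n).2 z hz
    have h2 := (hW K k).2 z hz
    have h3 := (hW M m).2 z hz
    have h4 := (hW N' n').2 z hz
    by_cases hzQ : z ∈ Q
    · apply le_max_of_le_right
      have hb : a K k z / a M m z ≤ C := hC ⟨z, hzQ, rfl⟩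
      rw [le_div_iff₀ h2, one_div_mul_eq_div]
      exact hb.trans (le_max_right _ _)
    · refine (h z hz).trans (max_le_max ?_ ?_)
      · have hb := hs z ⟨hz, hzQ⟩
        rw [div_le_div_iff₀ h4 hS] at hb
        rw [div_le_div_iff₀ h4 h1]
        linarith
      · exact div_le_div_of_nonneg_right (le_max_left _ _) h2.le
end
end

section
/- Let 𝒜 = ((a_{N,n})_{N∈ℕ})_{n∈ℕ} be a double sequence of weights on 𝔻 with a_{N,n+1} ≤ a_{N,n} ≤ a_{N+1,n} pointwise, satisfying conditions (LOG) and (Σ), and assume 𝒜 is contained in a set W of essential weights which is closed under pointwise maxima of finitely many of its elements. Then 𝒜 satisfies both conditions (Q) and (B) if and only if 𝒜 satisfies both conditions (wQ) and (B). -/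
noncomputable section

open Complex

/-- under (LOG), (Σ) and with 𝒜 contained in a max-closed set of
essential weights, (Q) ∧ (B) ⟺ (wQ) ∧ (B). -/
theorem condQB_iff_condwQB (a' A : ℝ) (ha0 : 0 < a') (ha1 : a' < 1) (hA : 1 < A)
    (a : ℕ → ℕ → ℂ → ℝ)
    (hW : ∀ N n, IsWeight (a N n)) (hMono : MonoSeq a)
    (hLOG : SeqLOG a' A a) (hSigma : CondSigma a)
    (W : Set (ℂ → ℝ))
    (hWweight : ∀ v ∈ W, IsWeight v)
    (hWess : ∀ v ∈ W, Essential v)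
    (hWmax : ∀ v ∈ W, ∀ w ∈ W, (fun z => max (v z) (w z)) ∈ W)
    (hain : ∀ N n, a N n ∈ W) :
    (CondQ a ∧ CondB a) ↔ (CondwQ a ∧ CondB a) := by
  constructor
  · rintro ⟨hQ, hB⟩
    refine ⟨?_, hB⟩
    intro N
    obtain ⟨M, hM, n, h⟩ := hQ N
    refine ⟨M, hM, n, fun K hK m => ?_⟩
    obtain ⟨k, S, hS, h⟩ := h K hK m 1 one_pos
    refine ⟨k, max 1 S, lt_max_of_lt_left one_pos, fun z hz => (h z hz).trans ?_⟩
    have h1 := (hW N n).2 z hz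
    have h2 := (hW K k).2 z hz
    exact max_le_max (div_le_div_of_nonneg_right (le_max_left _ _) h1.le)
      (div_le_div_of_nonneg_right (le_max_right _ _) h2.le)
  · rintro ⟨hQ, hB⟩
    refine ⟨?_, hB⟩
    intro N
    obtain ⟨N', hN', hs⟩ := hSigma N
    obtain ⟨M, hM, n', h⟩ := hQ N'
    obtain ⟨n, hn, hs⟩ := hs n'
    refine ⟨M, le_trans hN' hM, n, fun K hK m ε hε => ?_⟩
    obtain ⟨k, S, hS, h⟩ := h K hK m
    obtain ⟨Q, hQc, hQs, hv⟩ := hs (ε / S) (div_pos hε hS)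
    have hcont : ContinuousOn (fun z => a K k z / a M m z) Q :=
      ((hW K k).1.mono hQs).div ((hW M m).1.mono hQs)
        (fun z hz => ((hW M m).2 z (hQs hz)).ne')
    obtain ⟨C, hC⟩ := hQc.exists_bound_of_continuousOn hcont
    refine ⟨k, max S C, lt_max_of_lt_left hS, fun z hz => ?_⟩
    have h1 := (hW N n).2 z hz
    have h2 := (hW K k).2 z hz
    have h3 := (hW M m).2 z hz
    have h4 := (hW N' n').2 z hz
    by_cases hzQ : z ∈ Q
    · refine le_trans ?_ (le_max_right _ _)
      have hb := (le_abs_self _).trans (hC z hzQ)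
      have hb' : a K k z / a M m z ≤ max S C := hb.trans (le_max_right _ _)
      rw [div_le_iff₀ h3] at hb'
      rw [div_le_div_iff₀ h3 h2]
      linarith
    · refine (h z hz).trans (max_le_max ?_ ?_)
      · have hb := hv z ⟨hz, hzQ⟩
        rw [div_le_div_iff₀ h4 hS] at hb
        rw [div_le_div_iff₀ h4 h1]
        linarith
      · exact div_le_div_of_nonneg_right (le_max_left _ _) h2.le
end
end
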